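/- Let B be a standard Brownian motion on [0,T] with natural filtration (\mathcal{F}_t), and let \mathcal{G}_t = \mathcal{F}_t \vee \sigma(B_T) be the initially enlarged filtration. Then the process \tilde{B}_t := B_t - \int_0^t (B_T - B_s)/(T - s) ds, for 0 \leq t < T, is a (\mathcal{G}_t)-Brownian motion on [0, T). -/

import Mathlib

open MeasureTheory ProbabilityTheory

/-- `W` is a Brownian motion on the time set `S` with respect to the filtration `G`:
it starts at `0`, is adapted, has a.s. continuous paths on `S`, and for `s ≤ t` in `S`
the increment `W_t - W_s` is independent of `G_s` with law `N(0, t - s)`. -/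
def IsBrownianMotionOn {Ω : Type*} [MeasurableSpace Ω] (μ : Measure Ω)
    (G : ℝ → MeasurableSpace Ω) (W : ℝ → Ω → ℝ) (S : Set ℝ) : Prop :=
  (∀ᵐ ω ∂μ, W 0 ω = 0) ∧
  (∀ t ∈ S, Measurable[G t] (W t)) ∧
  (∀ᵐ ω ∂μ, ContinuousOn (fun t => W t ω) S) ∧
  ∀ s t : ℝ, s ∈ S → t ∈ S → s ≤ t →
    Indep (MeasurableSpace.comap (fun ω => W t ω - W s ω) inferInstance) (G s) μ ∧
    Measure.map (fun ω => W t ω - W s ω) μ = gaussianReal 0 (Real.toNNReal (t - s))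


theorem indep_assoc {Ω : Type*} {m1 m2 m3 mΩ : MeasurableSpace Ω} {μ : Measure Ω}
    [IsProbabilityMeasure μ] (h1 : m1 ≤ mΩ) (h2 : m2 ≤ mΩ) (h3 : m3 ≤ mΩ)
    (h12 : Indep m1 m2 μ) (h123 : Indep (m1 ⊔ m2) m3 μ) : Indep m1 (m2 ⊔ m3) μ := by
  set p : Set (Set Ω) := {s | ∃ a b, MeasurableSet[m2] a ∧ MeasurableSet[m3] b ∧ s = a ∩ b} with hp
  have hgen : m2 ⊔ m3 = MeasurableSpace.generateFrom p := by
    apply le_antisymm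
    · refine sup_le (fun s hs => ?_) (fun s hs => ?_)
      · exact MeasurableSpace.measurableSet_generateFrom
          ⟨s, Set.univ, hs, @MeasurableSet.univ _ m3, by simp⟩
      · exact MeasurableSpace.measurableSet_generateFrom
          ⟨Set.univ, s, @MeasurableSet.univ _ m2, hs, by simp⟩
    · refine MeasurableSpace.generateFrom_le ?_
      rintro s ⟨a, b, ha, hb, rfl⟩
      have ha' : MeasurableSet[m2 ⊔ m3] a := (le_sup_left : m2 ≤ m2 ⊔ m3) _ ha
      have hb' : MeasurableSet[m2 ⊔ m3] b := (le_sup_right : m3 ≤ m2 ⊔ m3) _ hb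
      exact @MeasurableSet.inter _ (m2 ⊔ m3) _ _ ha' hb'
  refine IndepSets.indep (p1 := {s | MeasurableSet[m1] s}) (p2 := p) h1 (sup_le h2 h3)
    (@MeasurableSpace.isPiSystem_measurableSet _ m1) ?_
    (@MeasurableSpace.generateFrom_measurableSet _ m1).symm hgen ?_
  · rintro _ ⟨a, b, ha, hb, rfl⟩ _ ⟨a', b', ha', hb', rfl⟩ -
    exact ⟨a ∩ a', b ∩ b', @MeasurableSet.inter _ m2 _ _ ha ha',
      @MeasurableSet.inter _ m3 _ _ hb hb', Set.inter_inter_inter_comm _ _ _ _⟩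
  · rw [IndepSets_iff]
    rintro s _ hs ⟨a, b, ha, hb, rfl⟩
    rw [Indep_iff] at h12 h123
    have hs' : MeasurableSet[m1 ⊔ m2] s := (le_sup_left : m1 ≤ m1 ⊔ m2) _ hs
    have ha' : MeasurableSet[m1 ⊔ m2] a := (le_sup_right : m2 ≤ m1 ⊔ m2) _ ha
    rw [← Set.inter_assoc, h123 _ _ (@MeasurableSet.inter _ (m1 ⊔ m2) _ _ hs' ha') hb,
      h12 _ _ hs ha, h123 _ _ ha' hb, mul_assoc]

theorem riemann_tendsto {g : ℝ → ℝ} {s t : ℝ} (hst : s ≤ t) (hg : ContinuousOn g (Set.Icc s t)) :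
    Filter.Tendsto (fun n : ℕ => ∑ k ∈ Finset.range (n + 1),
      ((t - s) / (n + 1 : ℝ)) * g (s + k * ((t - s) / (n + 1 : ℝ)))) Filter.atTop
      (nhds (∫ u in s..t, g u)) := by
  have huc := isCompact_Icc.uniformContinuousOn_of_continuous hg
  rw [Metric.uniformContinuousOn_iff] at huc
  rw [Metric.tendsto_atTop]
  intro ε hε
  obtain ⟨δ, hδ, H⟩ := huc (ε / (t - s + 1)) (by have : 0 < t - s + 1 := by linarith
                                                 positivity)
  obtain ⟨N, hN⟩ := exists_nat_gt ((t - s) / δ)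
  refine ⟨N, fun n hn => ?_⟩
  have hn1 : (0:ℝ) < n + 1 := by positivity
  set h := (t - s) / (n + 1 : ℝ) with hh
  have hh0 : 0 ≤ h := div_nonneg (by linarith) hn1.le
  have hnh : (n + 1 : ℝ) * h = t - s := by rw [hh]; field_simp
  have hhδ : h < δ := by
    rw [hh, div_lt_iff₀ hn1]
    rw [div_lt_iff₀ hδ] at hN
    have : (N:ℝ) ≤ n := by exact_mod_cast hn
    nlinarith
  set a : ℕ → ℝ := fun k => s + k * h with ha
  have hamem : ∀ k, k ≤ n + 1 → a k ∈ Set.Icc s t := by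
    intro k hk
    have : (k:ℝ) ≤ n + 1 := by exact_mod_cast hk
    have h0 : (0:ℝ) ≤ k := by positivity
    simp only [ha, Set.mem_Icc]
    constructor <;> nlinarith
  have hintv : ∀ k < n + 1, IntervalIntegrable g volume (a k) (a (k+1)) := by
    intro k hk
    apply ContinuousOn.intervalIntegrable
    exact hg.mono (Set.uIcc_subset_Icc (hamem k hk.le) (hamem (k+1) hk))
  have hsum := intervalIntegral.sum_integral_adjacent_intervals hintv
  have ha0 : a 0 = s := by simp [ha]
  have han : a (n+1) = t := by simp only [ha]; push_cast; linarith
  rw [ha0, han] at hsum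
  rw [dist_eq_norm, ← hsum, ← Finset.sum_sub_distrib]
  have hC : 0 < ε / (t - s + 1) := by
    have : 0 < t - s + 1 := by linarith
    positivity
  have key : ∀ k ∈ Finset.range (n+1), ‖h * g (s + k * h) - ∫ u in a k..a (k+1), g u‖
      ≤ ε / (t - s + 1) * h := by
    intro k hk
    rw [Finset.mem_range] at hk
    have hd : a (k+1) - a k = h := by simp only [ha]; push_cast; ring
    have e1 : h * g (s + k * h) = ∫ u in a k..a (k+1), g (a k) := by
      rw [intervalIntegral.integral_const, hd, smul_eq_mul]
    rw [e1, ← intervalIntegral.integral_sub (by simp) (hintv k hk)]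
    have := intervalIntegral.norm_integral_le_of_norm_le_const
      (a := a k) (b := a (k+1)) (f := fun u => g (a k) - g u) (C := ε / (t - s + 1)) ?_
    · rwa [hd, abs_of_nonneg hh0] at this
    · intro x hx
      rw [Set.uIoc_of_le (by linarith)] at hx
      have hx2 : x ∈ Set.Icc s t :=
        ⟨(hamem k hk.le).1.trans hx.1.le, hx.2.trans (hamem (k+1) hk).2⟩
      have := H (a k) (hamem k hk.le) x hx2 (by
        rw [Real.dist_eq, abs_sub_comm, abs_of_nonneg (by linarith [hx.1])]
        linarith [hx.2])
      rw [dist_eq_norm] at this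
      exact this.le
  calc _ ≤ ∑ k ∈ Finset.range (n+1), ε / (t - s + 1) * h := norm_sum_le_of_le _ key
    _ = ε / (t - s + 1) * (t - s) := by
        rw [Finset.sum_const, Finset.card_range, nsmul_eq_mul]; push_cast
        rw [← hnh]; ring
    _ < ε := by
        rw [div_mul_eq_mul_div, div_lt_iff₀ (by linarith)]
        nlinarith

theorem indep_gauss_limit {Ω : Type*} {G mΩ : MeasurableSpace Ω} {μ : Measure Ω}
    [IsProbabilityMeasure μ] (D : ℕ → Ω → ℝ) (L : Ω → ℝ) (v : ℕ → NNReal) (w : NNReal)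
    (hD : ∀ n, Measurable (D n)) (hL : Measurable L)
    (hind : ∀ n, Indep (MeasurableSpace.comap (D n) inferInstance) G μ)
    (hlaw : ∀ n, Measure.map (D n) μ = gaussianReal 0 (v n))
    (hv : Filter.Tendsto v Filter.atTop (nhds w))
    (hlim : ∀ ω, Filter.Tendsto (fun n => D n ω) Filter.atTop (nhds (L ω))) :
    Indep (MeasurableSpace.comap L inferInstance) G μ ∧ Measure.map L μ = gaussianReal 0 w := by
  have key : ∀ F, MeasurableSet[G] F →
      Measure.map L (μ.restrict F) = μ F • gaussianReal 0 w := by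
    intro F hF
    have hn : ∀ n, Measure.map (D n) (μ.restrict F) = μ F • gaussianReal 0 (v n) := by
      intro n
      ext A hA
      rw [Measure.map_apply (hD n) hA, Measure.restrict_apply (hD n hA), Measure.smul_apply,
        ← hlaw n, Measure.map_apply (hD n) hA, smul_eq_mul]
      rw [(Indep_iff _ _ _).1 (hind n) _ _ ⟨A, hA, rfl⟩ hF, mul_comm]
    have hfin : IsFiniteMeasure (μ F • gaussianReal 0 w) :=
      ⟨by simp [Measure.smul_apply]⟩
    apply Measure.ext_of_charFun
    ext ξ
    have hc : ∀ u : NNReal, charFun (μ F • gaussianReal 0 u) ξ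
        = (μ F).toReal • charFun (gaussianReal 0 u) ξ := by
      intro u; simp only [charFun_apply, integral_smul_measure]
    have l1 : Filter.Tendsto (fun n => charFun (Measure.map (D n) (μ.restrict F)) ξ) Filter.atTop
        (nhds (charFun (μ F • gaussianReal 0 w) ξ)) := by
      simp only [hn, hc, charFun_gaussianReal]
      apply Filter.Tendsto.const_smul
      refine (Complex.continuous_exp.tendsto _).comp ?_
      have hv' : Filter.Tendsto (fun n => ((v n : ℝ) : ℂ)) Filter.atTop (nhds ((w : ℝ) : ℂ)) :=
        (Complex.continuous_ofReal.tendsto _).comp ((NNReal.continuous_coe.tendsto _).comp hv)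
      exact tendsto_const_nhds.sub ((hv'.mul_const _).div_const _)
    have l2 : Filter.Tendsto (fun n => charFun (Measure.map (D n) (μ.restrict F)) ξ) Filter.atTop
        (nhds (charFun (Measure.map L (μ.restrict F)) ξ)) := by
      have hm : ∀ f : Ω → ℝ, Measurable f → charFun (Measure.map f (μ.restrict F)) ξ
          = ∫ ω in F, Complex.exp (ξ * f ω * Complex.I) ∂μ := by
        intro f hf
        rw [charFun_apply_real, integral_map hf.aemeasurable (by fun_prop)]
      simp only [hm _ (hD _), hm _ hL]
      apply tendsto_integral_of_dominated_convergence (fun _ => (1:ℝ))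
      · intro n
        have := hD n
        exact Measurable.aestronglyMeasurable (by fun_prop)
      · simp
      · intro n
        refine Filter.Eventually.of_forall fun ω => ?_
        have := Complex.norm_exp_ofReal_mul_I (ξ * D n ω)
        push_cast at this
        exact this.le
      · refine Filter.Eventually.of_forall fun ω => ?_
        refine (Complex.continuous_exp.tendsto _).comp ?_
        exact (((Complex.continuous_ofReal.tendsto _).comp (hlim ω)).const_mul _).mul_const _
    exact tendsto_nhds_unique l2 l1
  have hlawL : Measure.map L μ = gaussianReal 0 w := by
    have := key Set.univ (@MeasurableSet.univ _ G)
    simpa using this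
  refine ⟨?_, hlawL⟩
  rw [Indep_iff]
  rintro _ F ⟨A, hA, rfl⟩ hF
  have := congrArg (fun ν => ν A) (key F hF)
  simp only [Measure.smul_apply, ← hlawL, Measure.map_apply hL hA,
    Measure.restrict_apply (hL hA), smul_eq_mul] at this
  rw [this, mul_comm]

theorem bridge_step {Ω : Type*} {Fa mΩ : MeasurableSpace Ω} {μ : Measure Ω}
    [IsProbabilityMeasure μ] (hF : Fa ≤ mΩ) {U V : Ω → ℝ} (hU : Measurable U) (hV : Measurable V)
    (p q : NNReal) (hq : 0 < q)
    (iU : Indep (MeasurableSpace.comap U inferInstance) Fa μ)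
    (iV : Indep (MeasurableSpace.comap V inferInstance)
      (Fa ⊔ MeasurableSpace.comap U inferInstance) μ)
    (lU : Measure.map U μ = gaussianReal 0 p) (lV : Measure.map V μ = gaussianReal 0 q)
    (X : Ω → ℝ) (hX : ∀ ω, X ω = U ω - (p / (p + q) : ℝ) * (U ω + V ω)) :
    Indep (MeasurableSpace.comap X inferInstance)
      (Fa ⊔ MeasurableSpace.comap (fun ω => U ω + V ω) inferInstance) μ ∧
    Measure.map X μ = gaussianReal 0 (p * q / (p + q)) := by
  have hpq : (0:ℝ) < p + q := by
    have : (0:ℝ) < q := by exact_mod_cast hq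
    positivity
  set c : ℝ := (p / (p + q) : ℝ) with hc
  set W : Ω → ℝ := fun ω => U ω + V ω with hW
  have hXeq : X = (fun ω => (1 - c) * U ω) + (fun ω => (-c) * V ω) := by
    ext ω; rw [hX]; simp only [Pi.add_apply]; ring
  have hUV : IndepFun U V μ := (indep_of_indep_of_le_right iV le_sup_right).symm
  have gU : HasGaussianLaw U μ := HasLaw.hasGaussianLaw (μ := gaussianReal 0 p) ⟨hU.aemeasurable, lU⟩
  have gV : HasGaussianLaw V μ := HasLaw.hasGaussianLaw (μ := gaussianReal 0 q) ⟨hV.aemeasurable, lV⟩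
  have gUV := hUV.hasGaussianLaw gU gV
  have hmX : Measurable X := by rw [hXeq]; fun_prop
  have hmW : Measurable W := by fun_prop
  have gXW : HasGaussianLaw (fun ω => (X ω, W ω)) μ := by
    have := gUV.map ((((1 - c) • ContinuousLinearMap.fst ℝ ℝ ℝ + (-c) • ContinuousLinearMap.snd ℝ ℝ ℝ)).prod
      (ContinuousLinearMap.fst ℝ ℝ ℝ + ContinuousLinearMap.snd ℝ ℝ ℝ))
    refine this.congr (Filter.Eventually.of_forall fun ω => ?_)
    simp [hXeq, hW]
  have m2U := gU.memLp_two
  have m2V := gV.memLp_two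
  have vU : Var[U; μ] = p := by
    have := variance_id_gaussianReal (μ := 0) (v := p)
    rw [← lU, variance_map (by fun_prop) hU.aemeasurable] at this
    simpa using this
  have vV : Var[V; μ] = q := by
    have := variance_id_gaussianReal (μ := 0) (v := q)
    rw [← lV, variance_map (by fun_prop) hV.aemeasurable] at this
    simpa using this
  have cUV : cov[U, V; μ] = 0 := hUV.covariance_eq_zero m2U m2V
  have hcov : cov[X, W; μ] = 0 := by
    have e2 : W = U + V := rfl
    have e1 : X = (1 - c) • U + (-c) • V := by rw [hXeq]; rfl
    rw [e1, e2, covariance_add_left (m2U.const_smul _) (m2V.const_smul _) (m2U.add m2V),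
      covariance_smul_left, covariance_smul_left, covariance_add_right m2U m2U m2V,
      covariance_add_right m2V m2U m2V, covariance_comm V U, cUV,
      covariance_self hU.aemeasurable, covariance_self hV.aemeasurable, vU, vV, hc]
    field_simp
    ring
  have iXW : IndepFun X W μ := gXW.indepFun_of_covariance_eq_zero hcov
  have iF : Indep Fa (MeasurableSpace.comap U inferInstance ⊔ MeasurableSpace.comap V inferInstance) μ :=
    indep_assoc hF hU.comap_le hV.comap_le iU.symm iV.symm
  set S := MeasurableSpace.comap U inferInstance ⊔ MeasurableSpace.comap V inferInstance with hS
  have sU : Measurable[S] U := Measurable.mono (comap_measurable U) le_sup_left le_rfl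
  have sV : Measurable[S] V := Measurable.mono (comap_measurable V) le_sup_right le_rfl
  have sX : Measurable[S] X := by
    rw [hXeq]; exact (sU.const_mul _).add (sV.const_mul _)
  have sW : Measurable[S] W := sU.add sV
  constructor
  · rw [sup_comm]
    refine indep_assoc hmX.comap_le hmW.comap_le hF iXW ?_
    exact indep_of_indep_of_le_left iF.symm (sup_le sX.comap_le sW.comap_le)
  · have h1 := gaussianReal_const_mul (X := U) (P := μ) ⟨hU.aemeasurable, lU⟩ (1 - c)
    have h2 := gaussianReal_const_mul (X := V) (P := μ) ⟨hV.aemeasurable, lV⟩ (-c)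
    have i12 : IndepFun (fun ω => (1 - c) * U ω) (fun ω => (-c) * V ω) μ :=
      hUV.comp (φ := fun x => (1 - c) * x) (ψ := fun x => (-c) * x) (by fun_prop) (by fun_prop)
    have := gaussianReal_add_gaussianReal_of_indepFun i12 h1.map_eq h2.map_eq
    rw [hXeq, this]
    congr 1
    · simp
    · apply NNReal.eq
      push_cast
      simp only [hc]
      field_simp
      ring

/-- Brownian bridge decomposition under initial enlargement by the terminal value:
if `B` is a standard Brownian motion on `[0,T]` with natural filtration `ℱ`, and
`𝒢_t = ℱ_t ⊔ σ(B_T)` is the initially enlarged filtration, then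
`B̃_t = B_t - ∫₀ᵗ (B_T - B_s)/(T - s) ds` is a `𝒢`-Brownian motion on `[0, T)`. -/
theorem brownian_bridge_enlargement {Ω : Type*} [MeasurableSpace Ω]
    (μ : Measure Ω) [IsProbabilityMeasure μ]
    (B : ℝ → Ω → ℝ)
    (hBmeas : ∀ t, Measurable (B t))
    (hB0 : ∀ ω, B 0 ω = 0)
    (hBcont : ∀ ω, Continuous fun t => B t ω)
    (ℱ : ℝ → MeasurableSpace Ω)
    (hℱ : ∀ t, ℱ t = ⨆ s ∈ Set.Icc (0:ℝ) t, MeasurableSpace.comap (B s) inferInstance)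
    (hℱle : ∀ t, ℱ t ≤ ‹MeasurableSpace Ω›)
    (hindep : ∀ s t : ℝ, 0 ≤ s → s ≤ t →
      Indep (MeasurableSpace.comap (fun ω => B t ω - B s ω) inferInstance) (ℱ s) μ)
    (hgauss : ∀ s t : ℝ, 0 ≤ s → s ≤ t →
      Measure.map (fun ω => B t ω - B s ω) μ = gaussianReal 0 (Real.toNNReal (t - s)))
    (T : ℝ) (hT : 0 < T)
    (𝒢 : ℝ → MeasurableSpace Ω)
    (h𝒢 : ∀ t, 𝒢 t = ℱ t ⊔ MeasurableSpace.comap (B T) inferInstance)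
    (Btilde : ℝ → Ω → ℝ)
    (hBtilde : ∀ t ω, Btilde t ω
      = B t ω - ∫ s in (0:ℝ)..t, (B T ω - B s ω) / (T - s)) :
    IsBrownianMotionOn μ 𝒢 Btilde (Set.Ico 0 T) := by
  have hFmono : ∀ a b, a ≤ b → ℱ a ≤ ℱ b := by
    intro a b hab
    rw [hℱ a, hℱ b]
    exact iSup₂_le fun r hr =>
      le_iSup₂_of_le (f := fun s (_ : s ∈ Set.Icc (0:ℝ) b) => MeasurableSpace.comap (B s) inferInstance)
        r ⟨hr.1, hr.2.trans hab⟩ le_rfl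
  have hFB : ∀ r t, 0 ≤ r → r ≤ t → Measurable[ℱ t] (B r) := by
    intro r t h0 hrt
    rw [hℱ t]
    refine Measurable.mono (comap_measurable (B r)) ?_ le_rfl
    exact le_iSup₂_of_le (f := fun s (_ : s ∈ Set.Icc (0:ℝ) t) =>
      MeasurableSpace.comap (B s) inferInstance) r ⟨h0, hrt⟩ le_rfl
  have hGmono : ∀ a b, a ≤ b → 𝒢 a ≤ 𝒢 b := by
    intro a b hab
    rw [h𝒢 a, h𝒢 b]
    exact sup_le_sup_right (hFmono a b hab) _
  have hGle : ∀ t, 𝒢 t ≤ ‹MeasurableSpace Ω› := by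
    intro t
    rw [h𝒢 t]
    exact sup_le (hℱle t) (hBmeas T).comap_le
  have hGB : ∀ r t, 0 ≤ r → r ≤ t → Measurable[𝒢 t] (B r) := by
    intro r t h0 hrt
    rw [h𝒢 t]
    exact (hFB r t h0 hrt).mono le_sup_left le_rfl
  have hGT : ∀ t, Measurable[𝒢 t] (B T) := by
    intro t
    rw [h𝒢 t]
    exact (comap_measurable (B T)).mono le_sup_right le_rfl
  -- the one step bridge residuals
  let X : ℝ → ℝ → Ω → ℝ := fun a b ω =>
    (B b ω - B a ω) - (b - a) / (T - a) * (B T ω - B a ω)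
  have hXG : ∀ a b, 0 ≤ a → a ≤ b → Measurable[𝒢 b] (X a b) := by
    intro a b h0 hab
    have m1 := hGB a b h0 hab
    have m2 := hGB b b (h0.trans hab) le_rfl
    exact (m2.sub m1).sub (((hGT b).sub m1).const_mul _)
  have hstep : ∀ a b, 0 ≤ a → a ≤ b → b < T →
      Indep (MeasurableSpace.comap (X a b) inferInstance) (𝒢 a) μ ∧
      Measure.map (X a b) μ = gaussianReal 0 (Real.toNNReal ((b - a) * (T - b) / (T - a))) := by
    intro a b h0 hab hbT
    have hU : Measurable (fun ω => B b ω - B a ω) := (hBmeas b).sub (hBmeas a)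
    have hV : Measurable (fun ω => B T ω - B b ω) := (hBmeas T).sub (hBmeas b)
    have c1 : ((b - a).toNNReal : ℝ) = b - a := Real.coe_toNNReal _ (by linarith)
    have c2 : ((T - b).toNNReal : ℝ) = T - b := Real.coe_toNNReal _ (by linarith)
    have hUF : Measurable[ℱ b] (fun ω => B b ω - B a ω) :=
      (hFB b b (h0.trans hab) le_rfl).sub (hFB a b h0 hab)
    have iV := indep_of_indep_of_le_right (hindep b T (h0.trans hab) hbT.le)
      (sup_le (hFmono a b hab) hUF.comap_le)
    obtain ⟨r1, r2⟩ := bridge_step (hℱle a) hU hV (b - a).toNNReal (T - b).toNNReal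
      (by rw [Real.toNNReal_pos]; linarith) (hindep a b h0 hab) iV (hgauss a b h0 hab)
      (hgauss b T (h0.trans hab) hbT.le) (X a b) (by
        intro ω
        simp only [X, c1, c2]
        have e : b - a + (T - b) = T - a := by ring
        rw [e]
        ring)
    constructor
    · refine indep_of_indep_of_le_right r1 ?_
      rw [h𝒢 a]
      refine sup_le le_sup_left ?_
      have e : B T = fun ω => B a ω + ((B b ω - B a ω) + (B T ω - B b ω)) := by
        ext ω; ring
      have : Measurable[ℱ a ⊔ MeasurableSpace.comap
          (fun ω => (B b ω - B a ω) + (B T ω - B b ω)) inferInstance] (B T) := by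
        conv => rhs; rw [e]
        exact ((hFB a a h0 le_rfl).mono le_sup_left le_rfl).add
          ((comap_measurable _).mono le_sup_right le_rfl)
      exact this.comap_le
    · rw [r2]
      congr 1
      apply NNReal.eq
      rw [Real.coe_toNNReal _ (div_nonneg (mul_nonneg (by linarith) (by linarith)) (by linarith))]
      push_cast
      rw [c1, c2]
      congr 1
      ring
  -- sums of residuals
  let S : ℝ → ℝ → ℕ → Ω → ℝ := fun s h j ω =>
    ∑ k ∈ Finset.range j, X (s + k * h) (s + (k + 1 : ℕ) * h) ω
  let v : ℝ → ℝ → ℕ → NNReal := fun s h j =>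
    ∑ k ∈ Finset.range j, Real.toNNReal (((s + (k + 1 : ℕ) * h) - (s + k * h)) *
      (T - (s + (k + 1 : ℕ) * h)) / (T - (s + k * h)))
  have hS : ∀ s h, 0 ≤ s → 0 ≤ h → ∀ j : ℕ, s + j * h < T →
      Measurable[𝒢 (s + j * h)] (S s h j) ∧
      Indep (MeasurableSpace.comap (S s h j) inferInstance) (𝒢 s) μ ∧
      Measure.map (S s h j) μ = gaussianReal 0 (v s h j) := by
    intro s h hs hh j
    induction j with
    | zero =>
      intro _
      have e : S s h 0 = fun _ => (0:ℝ) := by ext ω; simp [S]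
      rw [e]
      refine ⟨measurable_const, ?_, ?_⟩
      · rw [MeasurableSpace.comap_const]
        exact indep_bot_left _
      · simp [v, Measure.map_const]
    | succ j ih =>
      intro hj
      have hle : s + j * h ≤ s + (j + 1 : ℕ) * h := by push_cast; nlinarith
      have h0 : 0 ≤ s + j * h := by positivity
      have hsl : s ≤ s + j * h := by
        have : 0 ≤ j * h := by positivity
        linarith
      obtain ⟨i1, i2, i3⟩ := ih (lt_of_le_of_lt hle hj)
      obtain ⟨x1, x2⟩ := hstep _ _ h0 hle hj
      have xm := hXG _ _ h0 hle
      set Y := X (s + j * h) (s + (j + 1 : ℕ) * h) with hY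
      have e : S s h (j + 1) = S s h j + Y := by
        ext ω
        simp only [S, Finset.sum_range_succ, Pi.add_apply, hY]
      have ev : v s h (j + 1) = v s h j + Real.toNNReal (((s + (j + 1 : ℕ) * h) - (s + j * h)) *
          (T - (s + (j + 1 : ℕ) * h)) / (T - (s + j * h))) := by
        simp only [v, Finset.sum_range_succ]
      rw [e, ev]
      have mS : Measurable (S s h j) := i1.mono (hGle _) le_rfl
      have mY : Measurable Y := xm.mono (hGle _) le_rfl
      refine ⟨(i1.mono (hGmono _ _ hle) le_rfl).add xm, ?_, ?_⟩
      · have := indep_assoc (hGle s) mS.comap_le mY.comap_le i2.symm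
          (indep_of_indep_of_le_right x1 (sup_le (hGmono _ _ hsl) i1.comap_le)).symm
        refine (indep_of_indep_of_le_right this ?_).symm
        have m : Measurable[MeasurableSpace.comap (S s h j) inferInstance ⊔
            MeasurableSpace.comap Y inferInstance] (S s h j + Y) :=
          ((comap_measurable _).mono le_sup_left le_rfl).add
            ((comap_measurable _).mono le_sup_right le_rfl)
        exact m.comap_le
      · have ind : IndepFun (S s h j) Y μ :=
          (indep_of_indep_of_le_right x1 i1.comap_le).symm
        have := gaussianReal_add_gaussianReal_of_indepFun ind i3 x2
        rw [this, add_zero]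
  -- the drift integrand
  have hgc : ∀ ω t, t < T → ContinuousOn (fun u => (B T ω - B u ω) / (T - u)) (Set.Iic t) := by
    intro ω t ht
    refine ContinuousOn.div (continuous_const.sub (hBcont ω)).continuousOn
      (continuous_const.sub continuous_id).continuousOn ?_
    intro u hu
    have : u ≤ t := hu
    have : 0 < T - u := by linarith
    exact this.ne'
  have hgi : ∀ ω a b, a < T → b < T →
      IntervalIntegrable (fun u => (B T ω - B u ω) / (T - u)) volume a b := by
    intro ω a b ha hb
    apply ContinuousOn.intervalIntegrable
    refine (hgc ω (max a b) (max_lt ha hb)).mono ?_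
    intro u hu
    exact hu.2
  have hlim : ∀ s t, 0 ≤ s → s ≤ t → t < T → ∀ ω, Filter.Tendsto
      (fun n : ℕ => S s ((t - s) / (n + 1 : ℝ)) (n + 1) ω) Filter.atTop
      (nhds (Btilde t ω - Btilde s ω)) := by
    intro s t hs hst ht ω
    have e : Btilde t ω - Btilde s ω
        = (B t ω - B s ω) - ∫ u in s..t, (B T ω - B u ω) / (T - u) := by
      rw [hBtilde, hBtilde, ← intervalIntegral.integral_interval_sub_left (a := 0)
        (hgi ω 0 t hT ht) (hgi ω 0 s hT (hst.trans_lt ht))]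
      ring
    rw [e]
    have hr := riemann_tendsto hst ((hgc ω t ht).mono (fun u hu => hu.2))
    refine (hr.const_sub (B t ω - B s ω)).congr ?_
    intro n
    have hn1 : (0:ℝ) < n + 1 := by positivity
    set h := (t - s) / (n + 1 : ℝ) with hh
    have tel := Finset.sum_range_sub (fun k : ℕ => B (s + k * h) ω) (n + 1)
    have e1 : s + ((n + 1 : ℕ) : ℝ) * h = t := by
      rw [hh]; push_cast; field_simp; ring
    simp only [e1, Nat.cast_zero, zero_mul, add_zero] at tel
    simp only [S, X]
    rw [← tel, ← Finset.sum_sub_distrib]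
    refine Finset.sum_congr rfl fun k _ => ?_
    have : s + ((k + 1 : ℕ) : ℝ) * h - (s + k * h) = h := by push_cast; ring
    rw [this]
    ring
  have hvlim : ∀ s t, 0 ≤ s → s ≤ t → t < T → Filter.Tendsto
      (fun n : ℕ => v s ((t - s) / (n + 1 : ℝ)) (n + 1)) Filter.atTop
      (nhds (Real.toNNReal (t - s))) := by
    intro s t hs hst ht
    have hr := riemann_tendsto (g := fun u => 1 / (T - u)) hst (by
      refine ContinuousOn.div continuousOn_const
        (continuous_const.sub continuous_id).continuousOn ?_
      intro u hu
      have : 0 < T - u := by linarith [hu.2]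
      exact this.ne')
    have h0 : Filter.Tendsto (fun n : ℕ => (t - s) / (n + 1 : ℝ)) Filter.atTop (nhds 0) := by
      have := (tendsto_one_div_add_atTop_nhds_zero_nat (𝕜 := ℝ)).const_mul (t - s)
      simpa [div_eq_mul_inv] using this
    have hh := (h0.mul hr).const_sub (t - s)
    rw [zero_mul, sub_zero] at hh
    rw [← NNReal.tendsto_coe, Real.coe_toNNReal _ (by linarith)]
    refine hh.congr ?_
    intro n
    have hn1 : (0:ℝ) < n + 1 := by positivity
    set h := (t - s) / (n + 1 : ℝ) with hhd
    have hh0 : 0 ≤ h := div_nonneg (by linarith) hn1.le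
    have e1 : ((n:ℝ) + 1) * h = t - s := by
      rw [hhd]; field_simp
    have e2 : t - s = ∑ k ∈ Finset.range (n + 1), h := by
      rw [Finset.sum_const, Finset.card_range, nsmul_eq_mul]; push_cast; exact e1.symm
    simp only [v]
    rw [NNReal.coe_sum, Finset.mul_sum]
    conv_lhs => rw [e2]
    rw [← Finset.sum_sub_distrib]
    refine Finset.sum_congr rfl fun k hk => ?_
    rw [Finset.mem_range] at hk
    have hk' : ((k + 1 : ℕ) : ℝ) ≤ n + 1 := by exact_mod_cast hk
    have hb : s + ((k + 1 : ℕ) : ℝ) * h ≤ t := by nlinarith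
    have hd : s + ((k + 1 : ℕ) : ℝ) * h - (s + k * h) = h := by push_cast; ring
    have hpos : 0 < T - (s + k * h) := by linarith
    rw [hd, Real.coe_toNNReal _ (div_nonneg (mul_nonneg hh0 (by linarith)) hpos.le)]
    have e3 : T - (s + ((k + 1 : ℕ) : ℝ) * h) = T - (s + k * h) - h := by push_cast; ring
    rw [e3]
    generalize T - (s + k * h) = w at hpos
    field_simp
  have hz : ∀ ω, Btilde 0 ω = 0 := by
    intro ω; rw [hBtilde, hB0]; simp
  have hend : ∀ s t (n : ℕ), s + ((n + 1 : ℕ) : ℝ) * ((t - s) / (n + 1 : ℝ)) = t := by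
    intro s t n
    have hn1 : (0:ℝ) < n + 1 := by positivity
    push_cast; field_simp; ring
  have hmeas : ∀ t ∈ Set.Ico 0 T, Measurable[𝒢 t] (Btilde t) := by
    intro t ht
    refine @measurable_of_tendsto_metrizable Ω ℝ (𝒢 t) _ _ _ _
      (fun n : ℕ => S 0 ((t - 0) / (n + 1 : ℝ)) (n + 1)) _ ?_ ?_
    · intro n
      have := (hS 0 ((t - 0) / (n + 1 : ℝ)) le_rfl
        (div_nonneg (by linarith [ht.1]) (by positivity)) (n + 1)
        (by rw [hend]; exact ht.2)).1
      rwa [hend] at this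
    · rw [tendsto_pi_nhds]
      intro ω
      have := hlim 0 t le_rfl ht.1 ht.2 ω
      rw [hz, sub_zero (Btilde t ω)] at this
      exact this
  refine ⟨Filter.Eventually.of_forall hz, hmeas, Filter.Eventually.of_forall fun ω => ?_, ?_⟩
  · intro t ht
    apply ContinuousAt.continuousWithinAt
    have e : (fun t => Btilde t ω)
        = fun t => B t ω - ∫ s in (0:ℝ)..t, (B T ω - B s ω) / (T - s) := by
      ext t; exact hBtilde t ω
    rw [e]
    refine (hBcont ω).continuousAt.sub ?_
    obtain ⟨b, hb1, hb2⟩ := exists_between ht.2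
    have := intervalIntegral.continuousOn_primitive_interval'
      (hgi ω (-1) b (by linarith) hb2) (a := 0)
      (by rw [Set.uIcc_of_le (by linarith [ht.1])]; exact ⟨by linarith, by linarith [ht.1]⟩)
    refine this.continuousAt ?_
    rw [Set.uIcc_of_le (by linarith [ht.1])]
    exact Icc_mem_nhds (by linarith [ht.1]) hb1
  · intro s t hs ht hst
    have hSn := fun n : ℕ => hS s ((t - s) / (n + 1 : ℝ)) hs.1
      (div_nonneg (by linarith) (by positivity)) (n + 1) (by rw [hend]; exact ht.2)
    exact indep_gauss_limit (fun n : ℕ => S s ((t - s) / (n + 1 : ℝ)) (n + 1)) _ _ _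
      (fun n => (hSn n).1.mono (hGle _) le_rfl)
      (((hmeas t ht).mono (hGle _) le_rfl).sub ((hmeas s hs).mono (hGle _) le_rfl))
      (fun n => (hSn n).2.1) (fun n => (hSn n).2.2) (hvlim s t hs.1 hst ht.2)
      (hlim s t hs.1 hst ht.2)
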